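/- Let w_1, w_2, …, w_n be the entitlements of n agents and let γ ≥ 1. If every instance of the chore division problem with n agents and equal entitlements (1/n, …, 1/n) admits a γ-MMS assignment (an assignment in which every agent i receives a bundle of cost at most γ·MMS_i), then every instance with n agents and entitlements (w_1, …, w_n) admits a (γ·(max_i w_i)/(min_i w_i))-WMMS assignment. -/

import Mathlib

open Finset

/-- Cost of a bundle `S` of chores to agent `i`, given per-chore costs `V`. -/
noncomputable def costOf {n m : ℕ} (V : Fin n → Fin m → ℝ) (i : Fin n)
    (S : Finset (Fin m)) : ℝ :=
  ∑ b ∈ S, V i b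

/-- `A` is an `n`-partition of the chores: pairwise disjoint bundles whose union
is the set of all chores. -/
def IsPartition {n m : ℕ} (A : Fin n → Finset (Fin m)) : Prop :=
  (∀ j k, j ≠ k → Disjoint (A j) (A k)) ∧ Finset.univ.biUnion A = Finset.univ

/-- Weighted maximin share of agent `i` under entitlements `w`. -/
noncomputable def WMMS {n m : ℕ} (V : Fin n → Fin m → ℝ) (w : Fin n → ℝ)
    (i : Fin n) : ℝ :=
  sInf { x | ∃ A : Fin n → Finset (Fin m), IsPartition A ∧
    x = ⨆ j, costOf V i (A j) * (w i / w j) }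

/-- Unweighted maximin share of agent `i`. -/
noncomputable def MMS {n m : ℕ} (V : Fin n → Fin m → ℝ) (i : Fin n) : ℝ :=
  sInf { x | ∃ A : Fin n → Finset (Fin m), IsPartition A ∧
    x = ⨆ j, costOf V i (A j) }

/-!
For any agent `i`, an optimal partition `A` for `WMMS V w i` is also a competitor in the definition
of `MMS V i`. Dropping the factors `w i / w j` from its bundle costs raises their maximum by at most
`max_j (w j / w i)`, so `MMS V i ≤ (max w / min w) * WMMS V w i`. Hence the very same assignment
that is `γ`-MMS is already `(γ * (max w / min w))`-WMMS.
-/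

section Shares

variable {n m : ℕ}

theorem isPartition_fiber (owner : Fin m → Fin n) :
    IsPartition fun j => ({b | owner b = j} : Finset (Fin m)) :=
  ⟨fun _ _ hjk => disjoint_filter.2 fun _ _ hj hk => hjk (hj.symm.trans hk),
    eq_univ_of_forall fun b => mem_biUnion.2 ⟨owner b, mem_univ _, by simp⟩⟩

theorem finite_setOf_isPartition_eq {α : Type*} (f : (Fin n → Finset (Fin m)) → α) :
    {x | ∃ A, IsPartition A ∧ x = f A}.Finite :=
  (Set.finite_range f).subset fun _ ⟨A, _, hx⟩ => ⟨A, hx.symm⟩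

variable {V : Fin n → Fin m → ℝ} {w : Fin n → ℝ} {i : Fin n}

theorem costOf_nonneg (hV : ∀ b, 0 ≤ V i b) (T : Finset (Fin m)) : 0 ≤ costOf V i T :=
  sum_nonneg fun b _ => hV b

theorem MMS_le_iSup_costOf {A : Fin n → Finset (Fin m)} (hA : IsPartition A) :
    MMS V i ≤ ⨆ j, costOf V i (A j) :=
  csInf_le (finite_setOf_isPartition_eq _).bddBelow ⟨A, hA, rfl⟩

theorem exists_isPartition_WMMS_eq (V : Fin n → Fin m → ℝ) (w : Fin n → ℝ) (i : Fin n) :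
    ∃ A, IsPartition A ∧ WMMS V w i = ⨆ j, costOf V i (A j) * (w i / w j) :=
  Set.Nonempty.csInf_mem (s := {x | ∃ A : Fin n → Finset (Fin m), IsPartition A ∧
      x = ⨆ j, costOf V i (A j) * (w i / w j)})
    ⟨_, _, isPartition_fiber fun _ => i, rfl⟩ (finite_setOf_isPartition_eq _)

theorem WMMS_nonneg (hw : ∀ j, 0 ≤ w j) (hV : ∀ b, 0 ≤ V i b) : 0 ≤ WMMS V w i := by
  obtain ⟨A, -, hWMMS⟩ := exists_isPartition_WMMS_eq V w i
  rw [hWMMS]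
  exact Real.iSup_nonneg fun j => mul_nonneg (costOf_nonneg hV _) (div_nonneg (hw i) (hw j))

theorem iSup_costOf_le_mul_iSup_weighted (hw : ∀ j, 0 < w j) (hV : ∀ b, 0 ≤ V i b)
    (A : Fin n → Finset (Fin m)) :
    ⨆ j, costOf V i (A j) ≤ (⨆ j, w j) / w i * ⨆ j, costOf V i (A j) * (w i / w j) := by
  have : Nonempty (Fin n) := ⟨i⟩
  refine ciSup_le fun j => ?_
  have hmax_nonneg : 0 ≤ ⨆ k, w k := Real.iSup_nonneg fun k => (hw k).le
  have hwj_le_max : w j ≤ ⨆ k, w k := le_ciSup (Set.finite_range w).bddAbove j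
  have hweighted : costOf V i (A j) * (w i / w j) ≤ ⨆ k, costOf V i (A k) * (w i / w k) :=
    le_ciSup (f := fun k => costOf V i (A k) * (w i / w k)) (Set.finite_range _).bddAbove j
  have hwi_pos : 0 < w i := hw i
  have hwj_pos : 0 < w j := hw j
  have hcost : 0 ≤ costOf V i (A j) := costOf_nonneg hV (A j)
  calc costOf V i (A j)
      = w j / w i * (costOf V i (A j) * (w i / w j)) := by field_simp
    _ ≤ (⨆ k, w k) / w i * ⨆ k, costOf V i (A k) * (w i / w k) := by gcongr

theorem MMS_le_iSup_div_mul_WMMS (hw : ∀ j, 0 < w j) (hV : ∀ b, 0 ≤ V i b) :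
    MMS V i ≤ (⨆ j, w j) / w i * WMMS V w i := by
  obtain ⟨A, hA, hWMMS⟩ := exists_isPartition_WMMS_eq V w i
  rw [hWMMS]
  exact (MMS_le_iSup_costOf hA).trans (iSup_costOf_le_mul_iSup_weighted hw hV A)

theorem MMS_le_iSup_div_iInf_mul_WMMS (hw : ∀ j, 0 < w j) (hV : ∀ b, 0 ≤ V i b) :
    MMS V i ≤ (⨆ j, w j) / (⨅ j, w j) * WMMS V w i := by
  have : Nonempty (Fin n) := ⟨i⟩
  have hmin_pos : 0 < ⨅ j, w j := by
    obtain ⟨j, hj⟩ := exists_eq_ciInf_of_finite (f := w)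
    exact hj ▸ hw j
  have hmin_le : ⨅ j, w j ≤ w i := ciInf_le (Set.finite_range w).bddBelow i
  have hmax_nonneg : 0 ≤ ⨆ j, w j := Real.iSup_nonneg fun j => (hw j).le
  have hWMMS : 0 ≤ WMMS V w i := WMMS_nonneg (fun j => (hw j).le) hV
  calc MMS V i
      ≤ (⨆ j, w j) / w i * WMMS V w i := MMS_le_iSup_div_mul_WMMS hw hV
    _ ≤ (⨆ j, w j) / (⨅ j, w j) * WMMS V w i := by gcongr

theorem symmetric_to_asymmetric_WMMS_general {γ : ℝ} (hγ : 0 ≤ γ) (hw : ∀ i, 0 < w i)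
    (hV : ∀ i b, 0 ≤ V i b) {S : Fin n → Finset (Fin m)}
    (hS : ∀ i, costOf V i (S i) ≤ γ * MMS V i) (i : Fin n) :
    costOf V i (S i) ≤ γ * ((⨆ j, w j) / (⨅ j, w j)) * WMMS V w i :=
  calc costOf V i (S i)
      ≤ γ * MMS V i := hS i
    _ ≤ γ * ((⨆ j, w j) / (⨅ j, w j) * WMMS V w i) := by
        gcongr
        exact MMS_le_iSup_div_iInf_mul_WMMS hw (hV i)
    _ = γ * ((⨆ j, w j) / (⨅ j, w j)) * WMMS V w i := (mul_assoc _ _ _).symm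

end Shares

/-- Lemma red2: if every instance with `n` agents and equal
entitlements admits a `γ`-MMS assignment, then every instance with `n` agents and
entitlements `w` admits a `(γ·(max wᵢ)/(min wᵢ))`-WMMS assignment. -/
theorem symmetric_to_asymmetric_WMMS (n : ℕ) (w : Fin n → ℝ) (γ : ℝ)
    (hγ : 1 ≤ γ) (hw : ∀ i, 0 < w i) (hw1 : ∀ i, w i ≤ 1)
    (hsum : ∑ i, w i = 1)
    (hsym : ∀ (m : ℕ) (V : Fin n → Fin m → ℝ), (∀ i b, 0 ≤ V i b) →
      ∃ S : Fin n → Finset (Fin m), IsPartition S ∧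
        ∀ i, costOf V i (S i) ≤ γ * MMS V i) :
    ∀ (m : ℕ) (V : Fin n → Fin m → ℝ), (∀ i b, 0 ≤ V i b) →
      ∃ S : Fin n → Finset (Fin m), IsPartition S ∧
        ∀ i, costOf V i (S i) ≤ γ * ((⨆ j, w j) / (⨅ j, w j)) * WMMS V w i := by
  intro m V hV
  obtain ⟨S, hS, hcost⟩ := hsym m V hV
  exact ⟨S, hS, symmetric_to_asymmetric_WMMS_general (zero_le_one.trans hγ) hw hV hcost⟩
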